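/- Let N ≥ 1 and let L ∈ ℝ^{N×N} be the Laplacian matrix of a connected undirected weighted graph, i.e. L is symmetric, has nonpositive off-diagonal entries, satisfies L·1_N = 0, is positive semidefinite, and 0 is a simple eigenvalue of L. Let γ₁, γ₂ ∈ ℝ satisfy γ₂ > γ₁ > 0 and γ₁ − 2γ₂ > −4/μ for every nonzero eigenvalue μ of L. Define F = [[I_N, I_N], [−γ₁L, I_N − γ₂L]] ∈ ℝ^{2N×2N}. Then for every initial condition x⁽⁰⁾ = (p⁽⁰⁾; v⁽⁰⁾) ∈ ℝ^{2N}, the solution x⁽ᵏ⁾ = Fᵏ x⁽⁰⁾ = (p⁽ᵏ⁾; v⁽ᵏ⁾) satisfies lim_{k→∞} ‖(p⁽ᵏ⁾; v⁽ᵏ⁾) − ((1/N)∑_{j=1}^N (p_j⁽⁰⁾ + k·v_j⁽⁰⁾)·1_N ; (1/N)∑_{j=1}^N v_j⁽⁰⁾·1_N)‖ = 0; in particular p_i⁽ᵏ⁾ − p_j⁽ᵏ⁾ → 0 and v_i⁽ᵏ⁾ − v_j⁽ᵏ⁾ → 0 for all i, j. -/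

import Mathlib

/-!
A linear map intertwining two operators carries consensus trajectories of the first to consensus
trajectories of the second. Pairing with an orthonormal eigenbasis of the (symmetric) Laplacian
therefore splits the dynamics into scalar modes, one for each eigenvalue `μ`. A mode with `μ = 0`
drifts uniformly, and subtracting the drift `Π p₀ + k Π v₀`, with `Π` the orthogonal projection onto
the kernel, removes it. A mode with `μ ≠ 0` obeys a second-order recurrence, whose Schur–Cohn
stability conditions are those imposed on `γ₁` and `γ₂`. For a connected graph the kernel is spanned
by the all-ones vector, so `Π` is averaging.
-/

open Filter Matrix
open scoped Topology InnerProductSpace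

theorem tendsto_sub_succ_zero_of_antitone {α : Type*} [AddCommGroup α]
    [ConditionallyCompleteLinearOrder α] [TopologicalSpace α] [OrderTopology α]
    [IsTopologicalAddGroup α] {V : ℕ → α} (hV : Antitone V) (hbdd : BddBelow (Set.range V)) :
    Tendsto (fun k => V k - V (k + 1)) atTop (𝓝 0) := by
  have hlim := tendsto_atTop_ciInf hV hbdd
  simpa only [sub_self, Function.comp_apply] using hlim.sub (hlim.comp (tendsto_add_atTop_nat 1))

theorem tendsto_of_tendsto_inner_orthonormalBasis {ι 𝕜 E α : Type*} [Fintype ι] [RCLike 𝕜]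
    [NormedAddCommGroup E] [InnerProductSpace 𝕜 E] (b : OrthonormalBasis ι 𝕜 E)
    {f : α → E} {l : Filter α} {x : E}
    (h : ∀ i, Tendsto (fun a => ⟪b i, f a⟫_𝕜) l (𝓝 ⟪b i, x⟫_𝕜)) : Tendsto f l (𝓝 x) := by
  simpa only [b.sum_repr'] using tendsto_finsetSum Finset.univ fun i _ => (h i).smul_const (b i)

section SecondOrderRecurrence

variable {s : ℕ → ℝ} {t d : ℝ}

/-- The quadratic Lyapunov function of the recurrence `s (k + 2) = t * s (k + 1) - d * s k`,
evaluated along `s`; it is positive definite exactly when `|t| < 1 + d`. -/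
def recurrenceEnergy (t d : ℝ) (s : ℕ → ℝ) (k : ℕ) : ℝ :=
  (1 + d) * (s (k + 1) ^ 2 + s k ^ 2) - 2 * t * s (k + 1) * s k

theorem recurrenceEnergy_nonneg (ht : |t| ≤ 1 + d) (k : ℕ) : 0 ≤ recurrenceEnergy t d s k := by
  obtain ⟨hneg, hpos⟩ := abs_le.1 ht
  have hsum : 0 ≤ (1 + d - t) * (s (k + 1) + s k) ^ 2 :=
    mul_nonneg (sub_nonneg.2 hpos) (sq_nonneg _)
  have hdiff : 0 ≤ (1 + d + t) * (s (k + 1) - s k) ^ 2 :=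
    mul_nonneg (by linarith) (sq_nonneg _)
  unfold recurrenceEnergy
  linarith

theorem recurrenceEnergy_sub_succ (hs : ∀ k, s (k + 2) = t * s (k + 1) - d * s k) (k : ℕ) :
    recurrenceEnergy t d s k - recurrenceEnergy t d s (k + 1) =
      (1 - d) * (s (k + 2) - s k) ^ 2 := by
  simp only [recurrenceEnergy, show k + 1 + 1 = k + 2 from rfl, hs k]
  ring

theorem tendsto_add_two_sub_zero_of_recurrence
    (hs : ∀ k, s (k + 2) = t * s (k + 1) - d * s k) (ht : |t| ≤ 1 + d) (hd : d < 1) :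
    Tendsto (fun k => s (k + 2) - s k) atTop (𝓝 0) := by
  have hd' : 0 < 1 - d := sub_pos.2 hd
  have hanti : Antitone (recurrenceEnergy t d s) := antitone_nat_of_succ_le fun k => by
    rw [← sub_nonneg, recurrenceEnergy_sub_succ hs]
    positivity
  have hbdd : BddBelow (Set.range (recurrenceEnergy t d s)) :=
    ⟨0, Set.forall_mem_range.2 (recurrenceEnergy_nonneg ht)⟩
  have hsq : Tendsto (fun k => (s (k + 2) - s k) ^ 2) atTop (𝓝 0) := by
    have h := (tendsto_sub_succ_zero_of_antitone hanti hbdd).const_mul (1 - d)⁻¹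
    simpa only [recurrenceEnergy_sub_succ hs, inv_mul_cancel_left₀ hd'.ne', mul_zero] using h
  rw [tendsto_zero_iff_abs_tendsto_zero]
  simpa only [Function.comp_def, Real.sqrt_sq_eq_abs, Real.sqrt_zero] using hsq.sqrt

/-- The **Schur–Cohn criterion**: the conditions say that both roots of `X ^ 2 - t * X + d` lie in
the open unit disc. -/
theorem tendsto_zero_of_recurrence (hs : ∀ k, s (k + 2) = t * s (k + 1) - d * s k)
    (ht : |t| < 1 + d) (hd : d < 1) : Tendsto s atTop (𝓝 0) := by
  have hdet : (1 + d) ^ 2 - t ^ 2 ≠ 0 := (sub_pos.2 (sq_lt_sq' (abs_lt.1 ht).1 (abs_lt.1 ht).2)).ne'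
  have hgap := tendsto_add_two_sub_zero_of_recurrence hs ht.le hd
  -- By the recurrence, two successive gaps are linear in `s k` and `s (k + 1)`, with determinant
  -- `(1 + d) ^ 2 - t ^ 2`; the next identity solves for `s k`.
  have hsolve (k : ℕ) : s k = ((1 + d) ^ 2 - t ^ 2)⁻¹ *
      ((t ^ 2 - (1 + d)) * (s (k + 2) - s k) - t * (s (k + 3) - s (k + 1))) := by
    rw [eq_inv_mul_iff_mul_eq₀ hdet, hs (k + 1), hs k]
    ring
  have hlim := ((hgap.const_mul (t ^ 2 - (1 + d))).sub
    ((hgap.comp (tendsto_add_atTop_nat 1)).const_mul t)).const_mul ((1 + d) ^ 2 - t ^ 2)⁻¹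
  simp only [mul_zero, sub_self] at hlim
  exact hlim.congr fun k => (hsolve k).symm

end SecondOrderRecurrence

/-- Positions `p` and velocities `v` of a system of unit-step double integrators under the consensus
control law, with an arbitrary linear operator `T` in the place of the graph Laplacian. -/
structure IsConsensusTrajectory {R M : Type*} [Ring R] [AddCommGroup M] [Module R M]
    (T : M →ₗ[R] M) (γ₁ γ₂ : R) (p v : ℕ → M) : Prop where
  position_succ (k : ℕ) : p (k + 1) = p k + v k
  velocity_succ (k : ℕ) : v (k + 1) = v k - γ₁ • T (p k) - γ₂ • T (v k)

namespace IsConsensusTrajectory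

section Algebra

variable {R M M' : Type*} [Ring R] [AddCommGroup M] [Module R M] [AddCommGroup M'] [Module R M']
  {T : M →ₗ[R] M} {T' : M' →ₗ[R] M'} {γ₁ γ₂ : R} {p v p' v' : ℕ → M}

protected theorem map (h : IsConsensusTrajectory T γ₁ γ₂ p v) (φ : M →ₗ[R] M')
    (hφ : ∀ x, φ (T x) = T' (φ x)) :
    IsConsensusTrajectory T' γ₁ γ₂ (fun k => φ (p k)) (fun k => φ (v k)) where
  position_succ k := by rw [h.position_succ, map_add]
  velocity_succ k := by simp only [h.velocity_succ, map_sub, map_smul, hφ]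

protected theorem sub (h : IsConsensusTrajectory T γ₁ γ₂ p v)
    (h' : IsConsensusTrajectory T γ₁ γ₂ p' v') :
    IsConsensusTrajectory T γ₁ γ₂ (fun k => p k - p' k) (fun k => v k - v' k) where
  position_succ k := by
    rw [h.position_succ, h'.position_succ]
    abel
  velocity_succ k := by
    simp only [h.velocity_succ, h'.velocity_succ, map_sub, smul_sub]
    abel

theorem of_mem_ker {a b : M} (ha : a ∈ LinearMap.ker T) (hb : b ∈ LinearMap.ker T) :
    IsConsensusTrajectory T γ₁ γ₂ (fun k => a + (k : R) • b) (fun _ => b) where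
  position_succ k := by rw [Nat.cast_succ, add_smul, one_smul, add_assoc]
  velocity_succ k := by
    rw [LinearMap.mem_ker] at ha hb
    simp only [map_add, map_smul, ha, hb, smul_zero, add_zero, sub_zero]

theorem eq_zero (h : IsConsensusTrajectory T γ₁ γ₂ p v) (hp : p 0 = 0) (hv : v 0 = 0) (k : ℕ) :
    p k = 0 ∧ v k = 0 := by
  induction k with
  | zero => exact ⟨hp, hv⟩
  | succ k ih => simp [h.position_succ, h.velocity_succ, ih.1, ih.2]

theorem position_add_two (h : IsConsensusTrajectory T γ₁ γ₂ p v) (k : ℕ) :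
    p (k + 2) = p (k + 1) + (p (k + 1) - p k) - γ₁ • T (p k) - γ₂ • T (p (k + 1) - p k) := by
  have hv : p (k + 1) - p k = v k := by rw [h.position_succ, add_sub_cancel_left]
  rw [hv, h.position_succ (k + 1), h.velocity_succ]
  abel

theorem tendsto_velocity_zero [TopologicalSpace M] [IsTopologicalAddGroup M]
    (h : IsConsensusTrajectory T γ₁ γ₂ p v) (hp : Tendsto p atTop (𝓝 0)) :
    Tendsto v atTop (𝓝 0) := by
  simpa [Function.comp_def, h.position_succ] using (hp.comp (tendsto_add_atTop_nat 1)).sub hp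

end Algebra

theorem tendsto_zero_of_smul_id {μ γ₁ γ₂ : ℝ} {p v : ℕ → ℝ}
    (h : IsConsensusTrajectory (μ • LinearMap.id) γ₁ γ₂ p v) (hγ₁ : 0 < γ₁) (hγ₁₂ : γ₁ < γ₂)
    (hμ_pos : 0 < μ) (hμ : -4 / μ < γ₁ - 2 * γ₂) :
    Tendsto p atTop (𝓝 0) ∧ Tendsto v atTop (𝓝 0) := by
  have hgain : -4 < (γ₁ - 2 * γ₂) * μ := (div_lt_iff₀ hμ_pos).1 hμ
  have hγ₁μ : 0 < γ₁ * μ := mul_pos hγ₁ hμ_pos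
  have hγ₁₂μ : γ₁ * μ < γ₂ * μ := mul_lt_mul_of_pos_right hγ₁₂ hμ_pos
  have hrec (k : ℕ) :
      p (k + 2) = (2 - γ₂ * μ) * p (k + 1) - (1 - γ₂ * μ + γ₁ * μ) * p k := by
    simp only [h.position_add_two, LinearMap.smul_apply, LinearMap.id_apply, smul_eq_mul]
    ring
  have hp : Tendsto p atTop (𝓝 0) :=
    tendsto_zero_of_recurrence hrec (abs_lt.2 ⟨by linarith, by linarith⟩) (by linarith)
  exact ⟨hp, h.tendsto_velocity_zero hp⟩

section Spectral

variable {E : Type*} [NormedAddCommGroup E] [InnerProductSpace ℝ E] [FiniteDimensional ℝ E]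
  {T : E →ₗ[ℝ] E} {γ₁ γ₂ : ℝ} {p v : ℕ → E}

theorem tendsto_zero_of_mem_orthogonal_ker (h : IsConsensusTrajectory T γ₁ γ₂ p v)
    (hT : T.IsSymmetric) (hγ₁ : 0 < γ₁) (hγ₁₂ : γ₁ < γ₂)
    (hμ : ∀ μ ∈ spectrum ℝ T, μ ≠ 0 → -4 / μ < γ₁ - 2 * γ₂)
    (hp : p 0 ∈ (LinearMap.ker T)ᗮ) (hv : v 0 ∈ (LinearMap.ker T)ᗮ) :
    Tendsto p atTop (𝓝 0) ∧ Tendsto v atTop (𝓝 0) := by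
  let b := hT.eigenvectorBasis rfl
  let μ := hT.eigenvalues rfl
  have hTb (i) : T (b i) = μ i • b i := hT.apply_eigenvectorBasis rfl i
  have hmode (i) : IsConsensusTrajectory (μ i • LinearMap.id) γ₁ γ₂
      (fun k => ⟪b i, p k⟫_ℝ) (fun k => ⟪b i, v k⟫_ℝ) :=
    h.map (innerₗ E (b i)) fun x => by simp [← hT (b i) x, hTb, inner_smul_left]
  have hlim (i) : Tendsto (fun k => ⟪b i, p k⟫_ℝ) atTop (𝓝 0) ∧
      Tendsto (fun k => ⟪b i, v k⟫_ℝ) atTop (𝓝 0) := by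
    by_cases hμi : μ i = 0
    · have hker : b i ∈ LinearMap.ker T := by rw [LinearMap.mem_ker, hTb, hμi, zero_smul]
      have hzero := (hmode i).eq_zero (hp _ hker) (hv _ hker)
      simp [hzero]
    · have hgain : -4 / μ i < γ₁ - 2 * γ₂ :=
        hμ _ (hT.hasEigenvalue_eigenvalues rfl i).mem_spectrum hμi
      -- The gain condition rules out negative eigenvalues, since `γ₁ - 2 * γ₂ < 0`.
      have hμ_pos : 0 < μ i := by
        refine (lt_or_gt_of_ne hμi).resolve_left fun hneg => ?_
        linarith [div_pos_of_neg_of_neg (show (-4 : ℝ) < 0 by norm_num) hneg]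
      exact (hmode i).tendsto_zero_of_smul_id hγ₁ hγ₁₂ hμ_pos hgain
  exact ⟨tendsto_of_tendsto_inner_orthonormalBasis b fun i => by simpa using (hlim i).1,
    tendsto_of_tendsto_inner_orthonormalBasis b fun i => by simpa using (hlim i).2⟩

theorem tendsto_sub_starProjection_ker (h : IsConsensusTrajectory T γ₁ γ₂ p v)
    (hT : T.IsSymmetric) (hγ₁ : 0 < γ₁) (hγ₁₂ : γ₁ < γ₂)
    (hμ : ∀ μ ∈ spectrum ℝ T, μ ≠ 0 → -4 / μ < γ₁ - 2 * γ₂) :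
    Tendsto (fun k => p k - ((LinearMap.ker T).starProjection (p 0) +
        (k : ℝ) • (LinearMap.ker T).starProjection (v 0))) atTop (𝓝 0) ∧
      Tendsto (fun k => v k - (LinearMap.ker T).starProjection (v 0)) atTop (𝓝 0) := by
  have hdrift : IsConsensusTrajectory T γ₁ γ₂ _ _ :=
    of_mem_ker ((LinearMap.ker T).starProjection_apply_mem (p 0))
      ((LinearMap.ker T).starProjection_apply_mem (v 0))
  refine (h.sub hdrift).tendsto_zero_of_mem_orthogonal_ker hT hγ₁ hγ₁₂ hμ ?_ ?_
  · simp only [Nat.cast_zero, zero_smul, add_zero, Submodule.sub_starProjection_mem_orthogonal]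
  · exact Submodule.sub_starProjection_mem_orthogonal (v 0)

end Spectral

end IsConsensusTrajectory

section Laplacian

variable {n : Type*} [Fintype n]

theorem starProjection_span_one {𝕜 : Type*} [RCLike 𝕜] (x : EuclideanSpace 𝕜 n) :
    (𝕜 ∙ (WithLp.toLp 2 1 : EuclideanSpace 𝕜 n)).starProjection x =
      WithLp.toLp 2 fun _ => (∑ i, x i) / Fintype.card n := by
  ext i
  simp [Submodule.starProjection_singleton, PiLp.inner_apply, EuclideanSpace.norm_sq_eq]

variable [DecidableEq n]

theorem ker_toLin'_eq_span_one {K : Type*} [Field K] {L : Matrix n n K} (hrow : L *ᵥ 1 = 0)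
    (hsimple : Module.finrank K (LinearMap.ker L.toLin') = 1) :
    LinearMap.ker L.toLin' = K ∙ (1 : n → K) := by
  cases isEmpty_or_nonempty n
  · exact Subsingleton.elim _ _
  · refine (Submodule.eq_of_le_of_finrank_eq ?_ ?_).symm
    · rwa [Submodule.span_singleton_le_iff_mem, LinearMap.mem_ker, toLin'_apply]
    · rw [hsimple, finrank_span_singleton one_ne_zero]

theorem ker_toEuclideanLin_eq_span_one {𝕜 : Type*} [RCLike 𝕜] {L : Matrix n n 𝕜}
    (hrow : L *ᵥ 1 = 0) (hsimple : Module.finrank 𝕜 (LinearMap.ker L.toLin') = 1) :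
    LinearMap.ker L.toEuclideanLin = 𝕜 ∙ WithLp.toLp 2 1 := by
  ext x
  have hker : x ∈ LinearMap.ker L.toEuclideanLin ↔ x.ofLp ∈ LinearMap.ker L.toLin' :=
    (WithLp.ofLp_injective 2).eq_iff.symm
  rw [hker, ker_toLin'_eq_span_one hrow hsimple, Submodule.mem_span_singleton,
    Submodule.mem_span_singleton]
  exact exists_congr fun c =>
    (WithLp.ofLp_injective 2).eq_iff (a := c • (WithLp.toLp 2 1 : EuclideanSpace 𝕜 n))

/-- The one-step transition matrix `F` of the consensus dynamics, acting on stacked states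
`(p; v)`. -/
def consensusMatrix {R : Type*} [Ring R] (L : Matrix n n R) (γ₁ γ₂ : R) :
    Matrix (n ⊕ n) (n ⊕ n) R :=
  fromBlocks 1 1 (-(γ₁ • L)) (1 - γ₂ • L)

theorem isConsensusTrajectory_consensusMatrix_pow {R : Type*} [CommRing R] (L : Matrix n n R)
    (γ₁ γ₂ : R) (x : n ⊕ n → R) :
    IsConsensusTrajectory L.toLin' γ₁ γ₂
      (fun k => (consensusMatrix L γ₁ γ₂ ^ k *ᵥ x) ∘ Sum.inl)
      (fun k => (consensusMatrix L γ₁ γ₂ ^ k *ᵥ x) ∘ Sum.inr) where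
  position_succ k := by
    rw [pow_succ', ← mulVec_mulVec, consensusMatrix, fromBlocks_mulVec]
    simp
  velocity_succ k := by
    rw [pow_succ', ← mulVec_mulVec, consensusMatrix, fromBlocks_mulVec]
    simp only [Sum.elim_comp_inr, neg_mulVec, sub_mulVec, smul_mulVec, one_mulVec, toLin'_apply]
    abel

theorem tendsto_consensusMatrix_pow_mulVec_sub_average {L : Matrix n n ℝ} (hsym : L.IsSymm)
    (hrow : L *ᵥ 1 = 0) (hsimple : Module.finrank ℝ (LinearMap.ker L.toLin') = 1)
    {γ₁ γ₂ : ℝ} (hγ₁ : 0 < γ₁) (hγ₁₂ : γ₁ < γ₂)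
    (hμ : ∀ μ ∈ spectrum ℝ L, μ ≠ 0 → -4 / μ < γ₁ - 2 * γ₂) (x : n ⊕ n → ℝ) :
    Tendsto (fun k : ℕ => consensusMatrix L γ₁ γ₂ ^ k *ᵥ x -
      Sum.elim (fun _ => (∑ j, (x (Sum.inl j) + (k : ℝ) * x (Sum.inr j))) / (Fintype.card n : ℝ))
        (fun _ => (∑ j, x (Sum.inr j)) / (Fintype.card n : ℝ))) atTop (𝓝 0) := by
  have htraj := (isConsensusTrajectory_consensusMatrix_pow L γ₁ γ₂ x).map
    (T' := L.toEuclideanLin) (WithLp.linearEquiv 2 ℝ (n → ℝ)).symm.toLinearMap fun _ => rfl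
  have hT : L.toEuclideanLin.IsSymmetric :=
    isSymmetric_toEuclideanLin_iff.2 ((conjTranspose_eq_transpose_of_trivial L).trans hsym)
  obtain ⟨hp, hv⟩ := htraj.tendsto_sub_starProjection_ker hT hγ₁ hγ₁₂
    (by rwa [spectrum_toLpLin])
  rw [ker_toEuclideanLin_eq_span_one hrow hsimple] at hp hv
  simp only [starProjection_span_one] at hp hv
  rw [tendsto_pi_nhds]
  rintro (i | i)
  · have hpi := ((EuclideanSpace.proj (𝕜 := ℝ) i).continuous.tendsto 0).comp hp
    simpa [Function.comp_def, Finset.sum_add_distrib, ← Finset.mul_sum, add_div, mul_div_assoc]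
      using hpi
  · have hvi := ((EuclideanSpace.proj (𝕜 := ℝ) i).continuous.tendsto 0).comp hv
    simpa [Function.comp_def] using hvi

theorem stmt_0_general {L : Matrix n n ℝ} (hsym : L.IsSymm)
    (hrow : L *ᵥ 1 = 0) (hsimple : Module.finrank ℝ (LinearMap.ker L.toLin') = 1)
    {γ₁ γ₂ : ℝ} (hγ₁ : 0 < γ₁) (hγ₁₂ : γ₁ < γ₂)
    (hμ : ∀ μ ∈ spectrum ℝ L, μ ≠ 0 → -4 / μ < γ₁ - 2 * γ₂) (x : n ⊕ n → ℝ) :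
    Tendsto (fun k : ℕ => ‖consensusMatrix L γ₁ γ₂ ^ k *ᵥ x -
      Sum.elim (fun _ => (∑ j, (x (Sum.inl j) + (k : ℝ) * x (Sum.inr j))) / (Fintype.card n : ℝ))
        (fun _ => (∑ j, x (Sum.inr j)) / (Fintype.card n : ℝ))‖) atTop (𝓝 0) ∧
    ∀ i j : n,
      Tendsto (fun k : ℕ => (consensusMatrix L γ₁ γ₂ ^ k *ᵥ x) (Sum.inl i) -
        (consensusMatrix L γ₁ γ₂ ^ k *ᵥ x) (Sum.inl j)) atTop (𝓝 0) ∧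
      Tendsto (fun k : ℕ => (consensusMatrix L γ₁ γ₂ ^ k *ᵥ x) (Sum.inr i) -
        (consensusMatrix L γ₁ γ₂ ^ k *ᵥ x) (Sum.inr j)) atTop (𝓝 0) := by
  have hlim := tendsto_consensusMatrix_pow_mulVec_sub_average hsym hrow hsimple hγ₁ hγ₁₂ hμ x
  have hcoord := tendsto_pi_nhds.1 hlim
  refine ⟨tendsto_zero_iff_norm_tendsto_zero.1 hlim, fun i j => ⟨?_, ?_⟩⟩
  · simpa using (hcoord (Sum.inl i)).sub (hcoord (Sum.inl j))
  · simpa using (hcoord (Sum.inr i)).sub (hcoord (Sum.inr j))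

end Laplacian

/-- consensus for second-order agents over a connected undirected
graph with fixed topology (Lemma 1 / Xie-Wang conditions). -/
theorem stmt_0 (N : ℕ) (hN : 1 ≤ N) (L : Matrix (Fin N) (Fin N) ℝ)
    (hsym : L.IsSymm)
    (hoff : ∀ i j : Fin N, i ≠ j → L i j ≤ 0)
    (hrow : L.mulVec (fun _ => (1 : ℝ)) = 0)
    (hpsd : L.PosSemidef)
    (hsimple : Module.finrank ℝ (LinearMap.ker (Matrix.toLin' L)) = 1)
    (γ₁ γ₂ : ℝ) (hγ₁ : 0 < γ₁) (hγ₁₂ : γ₁ < γ₂)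
    (hμ : ∀ μ : ℝ, μ ∈ spectrum ℝ L → μ ≠ 0 → γ₁ - 2 * γ₂ > -4 / μ)
    (F : Matrix (Fin N ⊕ Fin N) (Fin N ⊕ Fin N) ℝ)
    (hF : F = Matrix.fromBlocks 1 1 (-(γ₁ • L)) (1 - γ₂ • L))
    (x0 : Fin N ⊕ Fin N → ℝ) :
    Tendsto (fun k : ℕ =>
        ‖(F ^ k).mulVec x0 -
          Sum.elim
            (fun _ : Fin N =>
              (∑ j : Fin N, (x0 (Sum.inl j) + (k : ℝ) * x0 (Sum.inr j))) / (N : ℝ))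
            (fun _ : Fin N => (∑ j : Fin N, x0 (Sum.inr j)) / (N : ℝ))‖)
      atTop (nhds 0)
    ∧ (∀ i j : Fin N,
        Tendsto (fun k : ℕ =>
            (F ^ k).mulVec x0 (Sum.inl i) - (F ^ k).mulVec x0 (Sum.inl j))
          atTop (nhds 0)
        ∧ Tendsto (fun k : ℕ =>
            (F ^ k).mulVec x0 (Sum.inr i) - (F ^ k).mulVec x0 (Sum.inr j))
          atTop (nhds 0)) := by
  subst hF
  simpa only [Fintype.card_fin] using! stmt_0_general hsym hrow hsimple hγ₁ hγ₁₂ hμ x0
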